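/- arXiv:1305.4131 — 7 statements merged into one kernel-verified Lean document; each statement's English description precedes it below -/
import Mathlib

section
/- Let I ⊆ {1,…,s}, let Σ be a finite set of zero-nonzero conditions on I containing Feas(𝒫_I, Z), and let A = [I₁,…,I_m] be a finite list of subsets of I. Then Mat(A,Σ) · c(Σ,Z) = Qu(𝒫^A, Z), i.e. for every J ∈ A one has ∑_{σ ∈ Σ} σ^J · c(σ,Z) = Qu(𝒫^J, Z). -/
open Classical in
/-- The invertibility `inv(a)` of an element of a field: `0` if `a = 0`, `1` otherwise,
viewed as an element of `{0,1} = Fin 2`. -/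
noncomputable def zinv {C : Type*} [Field C] (a : C) : Fin 2 := if a = 0 then 0 else 1

open Classical in
/-- Let `I ⊆ {1,…,s}`, `Sig` a finite set of zero-nonzero conditions on `I`
(encoded as maps `Fin s → Fin 2` vanishing outside `I`) containing `Feas(𝒫_I, Z)`, and
`A` a finite family of subsets of `I`.  Then for every `J ∈ A`,
`∑_{σ ∈ Sig} σ^J · c(σ, Z) = Qu(𝒫^J, Z)`. -/
theorem matrix_of_invertibility_queries
    {C : Type*} [Field C] [IsAlgClosed C] {k s : ℕ}
    (Z : Finset (Fin k → C)) (P : Fin s → MvPolynomial (Fin k) C)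
    (I : Finset (Fin s)) (Sig : Finset (Fin s → Fin 2))
    (hsupp : ∀ σ ∈ Sig, ∀ i, i ∉ I → σ i = 0)
    (hFeas : ∀ x ∈ Z,
      (fun i => if i ∈ I then zinv (MvPolynomial.eval x (P i)) else 0) ∈ Sig)
    (A : Finset (Finset (Fin s))) (hA : ∀ J ∈ A, J ⊆ I) :
    ∀ J ∈ A,
      ∑ σ ∈ Sig, (∏ i ∈ J, ((σ i : ℕ))) *
          (Z.filter (fun x => ∀ i ∈ I, zinv (MvPolynomial.eval x (P i)) = σ i)).card
        = (Z.filter (fun x => MvPolynomial.eval x (∏ i ∈ J, P i) ≠ 0)).card := by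
  intro J hJ
  have hJI := hA J hJ
  simp only [Finset.card_filter, Finset.mul_sum]
  rw [Finset.sum_comm]
  refine Finset.sum_congr rfl fun x hx => ?_
  rw [Finset.sum_eq_single_of_mem _ (hFeas x hx)]
  · have h1 : ∀ i ∈ I, zinv (MvPolynomial.eval x (P i)) =
        (if i ∈ I then zinv (MvPolynomial.eval x (P i)) else 0) := by
      intro i hi
      rw [if_pos hi]
    rw [if_pos h1, mul_one, map_prod]
    by_cases h : ∏ i ∈ J, MvPolynomial.eval x (P i) = 0
    · rw [if_neg (not_not.mpr h)]
      obtain ⟨i, hi, h0⟩ := Finset.prod_eq_zero_iff.mp h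
      refine Finset.prod_eq_zero hi ?_
      simp [hJI hi, zinv, h0]
    · rw [if_pos h]
      refine Finset.prod_eq_one fun i hi => ?_
      have h0 := Finset.prod_ne_zero_iff.mp h i hi
      simp [hJI hi, zinv, h0]
  · intro σ hσ hne
    rw [if_neg, mul_zero]
    intro h
    apply hne
    funext i
    by_cases hi : i ∈ I
    · simp only [if_pos hi, h i hi]
    · simp only [if_neg hi, hsupp σ hσ i hi]
end

section
/- For every I ⊆ {1,…,s} and every finite set Σ of zero-nonzero conditions on I, the adapted family satisfies card(Ada(Σ)) = card(Σ). -/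
open Classical in
/-- Restriction (extension by zero) of a zero-nonzero condition to the index set `I`. -/
noncomputable def zres (I : Finset ℕ) (σ : ℕ → Fin 2) : ℕ → Fin 2 :=
  fun j => if j ∈ I then σ j else 0

open Classical in
/-- The adapted family `Ada(Σ)` of a finite set `Σ` of zero-nonzero conditions on `I`
(encoded as maps `ℕ → Fin 2` vanishing outside `I`), defined by recursion on `card I`:
if `I = ∅` then `Ada(∅) = ∅` and `Ada({σ_∅}) = {∅}`; otherwise, with `i = max I`,
`I' = I \ {i}`, `Ξ` the set of restrictions of elements of `Σ` to `I'`, and `Ξ'` the set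
of elements of `Ξ` having two different extensions in `Σ`,
`Ada(Σ) = Ada(Ξ) ∪ {J ∪ {i} : J ∈ Ada(Ξ')}`. -/
noncomputable def Ada (I : Finset ℕ) (S : Finset (ℕ → Fin 2)) : Finset (Finset ℕ) :=
  if hI : I.Nonempty then
    let i := I.max' hI
    let I' := I.erase i
    let Xi : Finset (ℕ → Fin 2) := S.image (zres I')
    let Xi' : Finset (ℕ → Fin 2) :=
      Xi.filter (fun ξ => 1 < (S.filter (fun σ => zres I' σ = ξ)).card)
    Ada I' Xi ∪ (Ada I' Xi').image (insert i)
  else if S = ∅ then ∅ else {∅}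
termination_by I.card
decreasing_by
  all_goals exact Finset.card_erase_lt_of_mem (I.max'_mem hI)

theorem Ada_subset (n : ℕ) : ∀ (I : Finset ℕ) (S : Finset (ℕ → Fin 2)), I.card = n →
    ∀ J ∈ Ada I S, J ⊆ I := by
  induction n with
  | zero =>
    intro I S hn J hJ
    rw [Finset.card_eq_zero] at hn
    subst hn
    rw [Ada] at hJ
    by_cases h : S = ∅ <;> simp_all
  | succ n ih =>
    intro I S hn J hJ
    have hI : I.Nonempty := Finset.card_pos.mp (by omega)
    have hc : (I.erase (I.max' hI)).card = n := by
      rw [Finset.card_erase_of_mem (I.max'_mem hI)]; omega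
    rw [Ada, dif_pos hI] at hJ
    simp only [Finset.mem_union, Finset.mem_image] at hJ
    rcases hJ with hJ | ⟨K, hK, rfl⟩
    · exact (ih _ _ hc J hJ).trans (Finset.erase_subset _ _)
    · exact Finset.insert_subset (I.max'_mem hI)
        ((ih _ _ hc K hK).trans (Finset.erase_subset _ _))

open Classical in
theorem card_Ada_aux (n : ℕ) : ∀ (I : Finset ℕ) (S : Finset (ℕ → Fin 2)), I.card = n →
    (∀ σ ∈ S, ∀ j ∉ I, σ j = 0) → (Ada I S).card = S.card := by
  induction n with
  | zero =>
    intro I S hn hs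
    rw [Finset.card_eq_zero] at hn
    subst hn
    rw [Ada]
    by_cases h : S = ∅
    · simp [h]
    · have h1 : S = {0} := by
        rw [Finset.eq_singleton_iff_nonempty_unique_mem]
        refine ⟨Finset.nonempty_iff_ne_empty.mpr h, fun σ hσ => ?_⟩
        funext j
        exact hs σ hσ j (by simp)
      simp [h1]
  | succ n ih =>
    intro I S hn hs
    have hI : I.Nonempty := Finset.card_pos.mp (by omega)
    have hc : (I.erase (I.max' hI)).card = n := by
      rw [Finset.card_erase_of_mem (I.max'_mem hI)]; omega
    rw [Ada, dif_pos hI]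
    dsimp only
    generalize I.max' hI = i at *
    set I' := I.erase i with hI'
    have hi : i ∉ I' := by simp [hI']
    have hz : ∀ ξ ∈ S.image (zres I'), ∀ j ∉ I', ξ j = 0 := by
      intro ξ hξ j hj
      obtain ⟨σ, -, rfl⟩ := Finset.mem_image.mp hξ
      simp [zres, hj]
    have hdisj : ∀ A B : Finset (ℕ → Fin 2),
        Disjoint (Ada I' A) ((Ada I' B).image (insert i)) := by
      intro A B
      rw [Finset.disjoint_left]
      intro J hJ hJ2
      obtain ⟨K, -, rfl⟩ := Finset.mem_image.mp hJ2
      exact hi (Ada_subset n _ _ hc _ hJ (Finset.mem_insert_self _ _))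
    have hinj : ∀ B : Finset (ℕ → Fin 2),
        ((Ada I' B).image (insert i)).card = (Ada I' B).card := by
      intro B
      apply Finset.card_image_of_injOn
      intro J hJ K hK h
      have h1 : i ∉ J := fun h => hi (Ada_subset n _ _ hc _ hJ h)
      have h2 : i ∉ K := fun h => hi (Ada_subset n _ _ hc _ hK h)
      rw [← Finset.erase_insert h1, ← Finset.erase_insert h2]
      exact congrArg (fun L => Finset.erase L i) h
    rw [Finset.card_union_of_disjoint (hdisj _ _), hinj, ih _ _ hc hz,
      ih _ _ hc (fun ξ hξ => hz ξ (Finset.mem_filter.mp hξ).1),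
      Finset.card_eq_sum_card_image (zres I') S, Finset.card_filter,
      Finset.card_eq_sum_ones, ← Finset.sum_add_distrib]
    refine Finset.sum_congr rfl fun ξ hξ => ?_
    have hpos : 0 < (S.filter (fun σ => zres I' σ = ξ)).card := by
      obtain ⟨σ, hσ, h⟩ := Finset.mem_image.mp hξ
      exact Finset.card_pos.mpr ⟨σ, Finset.mem_filter.mpr ⟨hσ, h⟩⟩
    have hle : (S.filter (fun σ => zres I' σ = ξ)).card ≤ 2 := by
      have := Finset.card_le_card_of_injOn (s := S.filter (fun σ => zres I' σ = ξ))
        (t := (Finset.univ : Finset (Fin 2))) (fun σ => σ i) (fun _ _ => by simp) (by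
          intro σ hσ τ hτ h
          simp only [Finset.coe_filter, Set.mem_setOf_eq] at hσ hτ
          funext j
          by_cases hj : j ∈ I'
          · have := congrFun (hσ.2.trans hτ.2.symm) j
            simpa [zres, hj] using this
          · by_cases hji : j = i
            · subst hji; exact h
            · have : j ∉ I := fun h => hj (Finset.mem_erase.mpr ⟨hji, h⟩)
              rw [hs σ hσ.1 j this, hs τ hτ.1 j this])
      simpa using this
    split_ifs <;> omega

/-- For every `I ⊆ {1,…,s}` and every finite set `Σ` of zero-nonzero
conditions on `I`, the adapted family satisfies `card(Ada(Σ)) = card(Σ)`. -/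
theorem card_Ada_eq_card (s : ℕ) (I : Finset ℕ) (hI : I ⊆ Finset.Icc 1 s)
    (S : Finset (ℕ → Fin 2)) (hsupp : ∀ σ ∈ S, ∀ j ∉ I, σ j = 0) :
    (Ada I S).card = S.card := by
  exact card_Ada_aux _ I S rfl hsupp
end

section
/- Let I ⊆ {1,…,s} and Σ a finite set of zero-nonzero conditions on I. The adapted family Ada(Σ) is closed under taking subsets: if J ∈ Ada(Σ) and J' ⊆ J, then J' ∈ Ada(Σ). -/
theorem Ada_mono_aux (n : ℕ) : ∀ (I : Finset ℕ), I.card = n →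
    ∀ (S T : Finset (ℕ → Fin 2)), S ⊆ T → Ada I S ⊆ Ada I T := by
  classical
  induction n with
  | zero =>
    intro I hn S T hST J hJ
    have hI : ¬ I.Nonempty := by
      rw [Finset.card_eq_zero] at hn
      simp [hn]
    rw [Ada, dif_neg hI] at hJ ⊢
    by_cases hS : S = ∅
    · simp [hS] at hJ
    · have hT : T ≠ ∅ := by
        rintro rfl
        exact hS (Finset.subset_empty.mp hST)
      rw [if_neg hS] at hJ
      rwa [if_neg hT]
  | succ n ih =>
    intro I hn S T hST J hJ
    have hI : I.Nonempty := by
      rw [← Finset.card_pos]; omega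
    have hc : (I.erase (I.max' hI)).card = n := by
      rw [Finset.card_erase_of_mem (I.max'_mem hI)]; omega
    rw [Ada, dif_pos hI] at hJ ⊢
    simp only [Finset.mem_union, Finset.mem_image] at hJ ⊢
    rcases hJ with hJ | ⟨K, hK, rfl⟩
    · exact Or.inl (ih _ hc _ _ (Finset.image_subset_image hST) hJ)
    · refine Or.inr ⟨K, ih _ hc _ _ ?_ hK, rfl⟩
      intro ξ hξ
      rw [Finset.mem_filter] at hξ ⊢
      exact ⟨Finset.image_subset_image hST hξ.1,
        lt_of_lt_of_le hξ.2 (Finset.card_le_card (Finset.filter_subset_filter _ hST))⟩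

theorem Ada_down_aux (n : ℕ) : ∀ (I : Finset ℕ), I.card = n →
    ∀ (S : Finset (ℕ → Fin 2)) (J J' : Finset ℕ), J ∈ Ada I S → J' ⊆ J → J' ∈ Ada I S := by
  classical
  induction n with
  | zero =>
    intro I hn S J J' hJ hJ'
    have hI : ¬ I.Nonempty := by
      rw [Finset.card_eq_zero] at hn
      simp [hn]
    rw [Ada, dif_neg hI] at hJ ⊢
    by_cases hS : S = ∅
    · simp [hS] at hJ
    · rw [if_neg hS, Finset.mem_singleton] at hJ ⊢
      subst hJ
      exact Finset.subset_empty.mp hJ'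
  | succ n ih =>
    intro I hn S J J' hJ hJ'
    have hI : I.Nonempty := by
      rw [← Finset.card_pos]; omega
    have hc : (I.erase (I.max' hI)).card = n := by
      rw [Finset.card_erase_of_mem (I.max'_mem hI)]; omega
    rw [Ada, dif_pos hI] at hJ ⊢
    simp only [Finset.mem_union, Finset.mem_image] at hJ ⊢
    rcases hJ with hJ | ⟨K, hK, rfl⟩
    · exact Or.inl (ih _ hc _ _ _ hJ hJ')
    · have hsub : J'.erase (I.max' hI) ⊆ K := Finset.subset_insert_iff.mp hJ'
      have hm := ih _ hc _ _ _ hK hsub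
      by_cases hi : I.max' hI ∈ J'
      · exact Or.inr ⟨_, hm, Finset.insert_erase hi⟩
      · rw [Finset.erase_eq_of_notMem hi] at hm
        exact Or.inl (Ada_mono_aux n _ hc _ _ (Finset.filter_subset _ _) hm)

/-- Let `I ⊆ {1,…,s}` and `Σ` a finite set of zero-nonzero conditions
on `I`. The adapted family `Ada(Σ)` is closed under taking subsets: if `J ∈ Ada(Σ)`
and `J' ⊆ J`, then `J' ∈ Ada(Σ)`. -/
theorem Ada_downward_closed (s : ℕ) (I : Finset ℕ) (hI : I ⊆ Finset.Icc 1 s)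
    (S : Finset (ℕ → Fin 2)) (hsupp : ∀ σ ∈ S, ∀ j ∉ I, σ j = 0)
    (J J' : Finset ℕ) (hJ : J ∈ Ada I S) (hJ' : J' ⊆ J) :
    J' ∈ Ada I S := by
  exact Ada_down_aux _ I rfl S J J' hJ hJ'
end

section
/- Let I ⊆ {1,…,s} and Σ a finite set of zero-nonzero conditions on I. For every J ∈ Ada(Σ) one has card(J) < bit(card(Σ)); equivalently, 2^{card(J)} ≤ card(Σ). -/
open Classical in
theorem two_pow_card_le_aux (n : ℕ) : ∀ (I : Finset ℕ), I.card = n →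
    ∀ (S : Finset (ℕ → Fin 2)) (J : Finset ℕ), J ∈ Ada I S → 2 ^ J.card ≤ S.card := by
  induction n with
  | zero =>
    intro I hI S J hJ
    have h0 : I = ∅ := Finset.card_eq_zero.mp hI
    subst h0
    rw [Ada] at hJ
    by_cases hS : S = ∅
    · simp [hS] at hJ
    · simp [hS] at hJ
      subst hJ
      simpa [Nat.one_le_iff_ne_zero] using hS
  | succ n ih =>
    intro I hI S J hJ
    have hne : I.Nonempty := Finset.card_pos.mp (by omega)
    rw [Ada, dif_pos hne] at hJ
    have hc : (I.erase (I.max' hne)).card = n := by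
      rw [Finset.card_erase_of_mem (I.max'_mem hne), hI]; rfl
    rcases Finset.mem_union.mp hJ with h | h
    · exact (ih _ hc _ _ h).trans Finset.card_image_le
    · obtain ⟨K, hK, rfl⟩ := Finset.mem_image.mp h
      have h1 := ih _ hc _ _ hK
      have h3 : 2 ^ (insert (I.max' hne) K).card ≤ 2 ^ (K.card + 1) :=
        Nat.pow_le_pow_right (by norm_num) (Finset.card_insert_le _ _)
      refine h3.trans ?_
      rw [pow_succ]
      refine (Nat.mul_le_mul_right 2 h1).trans ?_
      rw [Finset.card_eq_sum_card_image (zres (I.erase (I.max' hne))) S, ← smul_eq_mul,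
        ← Finset.sum_const]
      refine (Finset.sum_le_sum ?_).trans
        (Finset.sum_le_sum_of_subset (Finset.filter_subset _ _))
      intro ξ hξ
      have := (Finset.mem_filter.mp hξ).2
      convert Nat.succ_le_of_lt this

/-- Let `I ⊆ {1,…,s}` and `Σ` a finite set of zero-nonzero conditions
on `I`. For every `J ∈ Ada(Σ)` one has `card J < bit(card Σ)` (where `bit n` is the
number of binary digits of `n`, i.e. `Nat.size n`); equivalently `2 ^ card J ≤ card Σ`. -/
theorem card_lt_bit_of_mem_Ada (s : ℕ) (I : Finset ℕ) (hI : I ⊆ Finset.Icc 1 s)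
    (S : Finset (ℕ → Fin 2)) (hsupp : ∀ σ ∈ S, ∀ j ∉ I, σ j = 0)
    (J : Finset ℕ) (hJ : J ∈ Ada I S) :
    J.card < Nat.size S.card ∧ 2 ^ J.card ≤ S.card := by
  have h := two_pow_card_le_aux _ I rfl S J hJ
  exact ⟨Nat.lt_size.mpr h, h⟩
end

section
/- Let I ⊆ {1,…,s} and Σ a finite set of zero-nonzero conditions on I. Then the square matrix Mat(Ada(Σ), Σ), with rows indexed by Ada(Σ) and columns indexed by Σ and (J,σ) entry σ^J, is invertible (over the rationals). -/
open Classical in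
/-- Elements of `Xi` with two extensions. -/
noncomputable def adaXi (I : Finset ℕ) (S : Finset (ℕ → Fin 2)) : Finset (ℕ → Fin 2) :=
  (S.image (zres I)).filter (fun ξ => 1 < (S.filter (fun σ => zres I σ = ξ)).card)

open Classical in
theorem ada_empty (S : Finset (ℕ → Fin 2)) : Ada ∅ S = if S = ∅ then ∅ else {∅} := by
  rw [Ada]; simp

open Classical in
theorem ada_insert (a : ℕ) (I : Finset ℕ) (h : ∀ x ∈ I, x < a) (S : Finset (ℕ → Fin 2)) :
    Ada (insert a I) S = Ada I (S.image (zres I)) ∪ (Ada I (adaXi I S)).image (insert a) := by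
  have hne : (insert a I).Nonempty := Finset.insert_nonempty a I
  have hmax : (insert a I).max' hne = a := by
    apply le_antisymm
    · apply Finset.max'_le
      intro y hy
      rcases Finset.mem_insert.1 hy with rfl | hy
      · exact le_rfl
      · exact (h y hy).le
    · exact Finset.le_max' _ _ (Finset.mem_insert_self a I)
  have hna : a ∉ I := fun ha => lt_irrefl a (h a ha)
  rw [Ada, dif_pos hne]
  simp only [hmax, Finset.erase_insert hna]
  unfold adaXi
  congr!

theorem ada_subset (I : Finset ℕ) : ∀ S : Finset (ℕ → Fin 2), ∀ J ∈ Ada I S, J ⊆ I := by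
  classical
  induction I using Finset.induction_on_max with
  | empty =>
    intro S J hJ
    rw [ada_empty] at hJ
    split_ifs at hJ <;> simp_all
  | insert a I h ih =>
    intro S J hJ
    rw [ada_insert a I h] at hJ
    rcases Finset.mem_union.1 hJ with hJ | hJ
    · exact (ih _ J hJ).trans (Finset.subset_insert _ _)
    · obtain ⟨K, hK, rfl⟩ := Finset.mem_image.1 hJ
      exact Finset.insert_subset_insert _ (ih _ K hK)

theorem zres_supp (I : Finset ℕ) (σ : ℕ → Fin 2) : ∀ j ∉ I, zres I σ j = 0 := by
  intro j hj; simp [zres, hj]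

theorem zres_ext {a : ℕ} {I : Finset ℕ} {σ τ : ℕ → Fin 2}
    (hσ : ∀ j ∉ insert a I, σ j = 0) (hτ : ∀ j ∉ insert a I, τ j = 0)
    (h : zres I σ = zres I τ) (ha : σ a = τ a) : σ = τ := by
  funext j
  by_cases hj : j ∈ I
  · simpa [zres, hj] using congrFun h j
  · by_cases hja : j = a
    · rw [hja, ha]
    · rw [hσ j (by simp [hj, hja]), hτ j (by simp [hj, hja])]

open Classical in
theorem fiber_card_le {a : ℕ} {I : Finset ℕ} {S : Finset (ℕ → Fin 2)}
    (hS : ∀ σ ∈ S, ∀ j ∉ insert a I, σ j = 0) (ξ : ℕ → Fin 2) :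
    (S.filter (fun σ => zres I σ = ξ)).card ≤ 2 := by
  have := Finset.card_le_card_of_injOn (s := S.filter (fun σ => zres I σ = ξ))
    (t := (Finset.univ : Finset (Fin 2))) (fun σ => σ a) (by simp) (by
      intro σ hσ τ hτ hst
      simp only [Finset.coe_filter, Set.mem_ofPred_eq] at hσ hτ
      exact zres_ext (hS σ hσ.1) (hS τ hτ.1) (hσ.2.trans hτ.2.symm) hst)
  simpa using this

theorem ada_card (I : Finset ℕ) : ∀ S : Finset (ℕ → Fin 2), (∀ σ ∈ S, ∀ j ∉ I, σ j = 0) →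
    (Ada I S).card = S.card := by
  classical
  induction I using Finset.induction_on_max with
  | empty =>
    intro S hS
    rw [ada_empty]
    split_ifs with h
    · simp [h]
    · symm
      rw [Finset.card_singleton, Finset.card_eq_one]
      refine ⟨0, Finset.eq_singleton_iff_nonempty_unique_mem.2
        ⟨Finset.nonempty_iff_ne_empty.2 h, fun σ hσ => ?_⟩⟩
      funext j
      exact hS σ hσ j (by simp)
  | insert a I h ih =>
    intro S hS
    have hna : a ∉ I := fun ha => lt_irrefl a (h a ha)
    rw [ada_insert a I h, Finset.card_union_of_disjoint, Finset.card_image_of_injOn, ih, ih]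
    · rw [Finset.card_eq_sum_card_image (zres I) S]
      unfold adaXi
      rw [Finset.card_filter, Finset.card_eq_sum_ones, ← Finset.sum_add_distrib]
      apply Finset.sum_congr rfl
      intro ξ hξ
      have h2 := fiber_card_le hS ξ
      have h1 : 0 < (S.filter (fun σ => zres I σ = ξ)).card := by
        obtain ⟨σ, hσ, rfl⟩ := Finset.mem_image.1 hξ
        exact Finset.card_pos.2 ⟨σ, by simp [hσ]⟩
      split_ifs <;> omega
    · intro ξ hξ
      obtain ⟨σ, hσ, rfl⟩ := Finset.mem_image.1 (Finset.mem_filter.1 hξ).1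
      exact zres_supp I σ
    · intro ξ hξ
      obtain ⟨σ, hσ, rfl⟩ := Finset.mem_image.1 hξ
      exact zres_supp I σ
    · intro J hJ K hK hJK
      have h1 : a ∉ J := fun ha => hna (ada_subset I _ J hJ ha)
      have h2 : a ∉ K := fun ha => hna (ada_subset I _ K hK ha)
      rw [← Finset.erase_insert h1, ← Finset.erase_insert h2]
      exact congrArg (fun X => Finset.erase X a) hJK
    · rw [Finset.disjoint_left]
      intro J hJ hJ'
      obtain ⟨K, hK, rfl⟩ := Finset.mem_image.1 hJ'
      exact hna (ada_subset I _ _ hJ (Finset.mem_insert_self a K))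

theorem prod_zres {I J : Finset ℕ} (hJ : J ⊆ I) (σ : ℕ → Fin 2) :
    ∏ i ∈ J, ((zres I σ i : ℕ) : ℚ) = ∏ i ∈ J, ((σ i : ℕ) : ℚ) := by
  apply Finset.prod_congr rfl
  intro i hi
  simp [zres, hJ hi]

theorem ada_inj (I : Finset ℕ) : ∀ S : Finset (ℕ → Fin 2), (∀ σ ∈ S, ∀ j ∉ I, σ j = 0) →
    ∀ c : (ℕ → Fin 2) → ℚ,
    (∀ J ∈ Ada I S, ∑ σ ∈ S, (∏ i ∈ J, ((σ i : ℕ) : ℚ)) * c σ = 0) → ∀ σ ∈ S, c σ = 0 := by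
  classical
  induction I using Finset.induction_on_max with
  | empty =>
    intro S hS c hc σ hσ
    have hne : S ≠ ∅ := Finset.ne_empty_of_mem hσ
    have hS1 : S = {σ} := by
      refine Finset.eq_singleton_iff_unique_mem.2 ⟨hσ, fun τ hτ => ?_⟩
      funext j
      rw [hS τ hτ j (by simp), hS σ hσ j (by simp)]
    have := hc ∅ (by rw [ada_empty, if_neg hne]; simp)
    rw [hS1] at this
    simpa using this
  | insert a I h ih =>
    intro S hS c hc
    have hna : a ∉ I := fun ha => lt_irrefl a (h a ha)
    rw [ada_insert a I h] at hc
    have key : ∀ (g : (ℕ → Fin 2) → ℚ) (J : Finset ℕ), J ⊆ I →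
        ∑ ξ ∈ S.image (zres I), (∏ i ∈ J, ((ξ i : ℕ) : ℚ)) *
          ∑ σ ∈ S.filter (fun σ => zres I σ = ξ), g σ
        = ∑ σ ∈ S, (∏ i ∈ J, ((σ i : ℕ) : ℚ)) * g σ := by
      intro g J hJ
      rw [← Finset.sum_fiberwise_of_maps_to (t := S.image (zres I)) (g := zres I)
        (fun σ hσ => Finset.mem_image_of_mem _ hσ)]
      apply Finset.sum_congr rfl
      intro ξ _
      rw [Finset.mul_sum]
      apply Finset.sum_congr rfl
      intro σ hσ
      rw [← (Finset.mem_filter.1 hσ).2, prod_zres hJ]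
    have hA : ∀ ξ ∈ S.image (zres I), ∑ σ ∈ S.filter (fun σ => zres I σ = ξ), c σ = 0 := by
      refine ih (S.image (zres I)) ?_
        (fun ξ => ∑ σ ∈ S.filter (fun σ => zres I σ = ξ), c σ) ?_
      · intro ξ hξ
        obtain ⟨σ, hσ, rfl⟩ := Finset.mem_image.1 hξ
        exact zres_supp I σ
      · intro J hJ
        rw [key c J (ada_subset I _ J hJ)]
        exact hc J (Finset.mem_union_left _ hJ)
    have hsing : ∀ σ ∈ S, zres I σ ∉ adaXi I S → c σ = 0 := by
      intro σ hσ hn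
      have hm : zres I σ ∈ S.image (zres I) := Finset.mem_image_of_mem _ hσ
      have h1 : (S.filter (fun τ => zres I τ = zres I σ)).card ≤ 1 := by
        by_contra hlt
        exact hn (Finset.mem_filter.2 ⟨hm, by omega⟩)
      have h2 : S.filter (fun τ => zres I τ = zres I σ) = {σ} := by
        refine Finset.eq_singleton_iff_unique_mem.2 ⟨by simp [hσ], fun τ hτ => ?_⟩
        exact Finset.card_le_one.1 h1 τ hτ σ (by simp [hσ])
      have := hA _ hm
      rwa [h2, Finset.sum_singleton] at this
    have hB : ∀ ξ ∈ adaXi I S,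
        ∑ σ ∈ S.filter (fun σ => zres I σ = ξ), ((σ a : ℕ) : ℚ) * c σ = 0 := by
      refine ih (adaXi I S) ?_
        (fun ξ => ∑ σ ∈ S.filter (fun σ => zres I σ = ξ), ((σ a : ℕ) : ℚ) * c σ) ?_
      · intro ξ hξ
        obtain ⟨σ, hσ, rfl⟩ := Finset.mem_image.1 (Finset.mem_filter.1 hξ).1
        exact zres_supp I σ
      · intro J hJ
        have hJI := ada_subset I _ J hJ
        have haJ : a ∉ J := fun ha => hna (hJI ha)
        rw [Finset.sum_subset (s₁ := adaXi I S) (s₂ := S.image (zres I)) (Finset.filter_subset _ _),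
          key (fun σ => ((σ a : ℕ) : ℚ) * c σ) J hJI]
        · rw [← hc (insert a J) (Finset.mem_union_right _ (Finset.mem_image_of_mem _ hJ))]
          apply Finset.sum_congr rfl
          intro σ _
          rw [Finset.prod_insert haJ]
          ring
        · intro ξ _ hn
          rw [Finset.sum_eq_zero, mul_zero]
          intro σ hσ
          obtain ⟨hσ, rfl⟩ := Finset.mem_filter.1 hσ
          rw [hsing σ (Finset.mem_filter.1 hσ).1 hn, mul_zero]
    -- values with `σ a = 1`
    have hone : ∀ σ ∈ S, σ a = 1 → c σ = 0 := by
      intro σ hσ ha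
      by_cases hx : zres I σ ∈ adaXi I S
      · have := hB _ hx
        rw [Finset.sum_eq_single_of_mem σ (by simp [hσ])] at this
        · simpa [ha] using this
        · intro τ hτ hne
          obtain ⟨hτ, hz⟩ := Finset.mem_filter.1 hτ
          have : τ a = 0 := by
            by_contra h0
            exact hne (zres_ext (hS τ hτ) (hS σ hσ) hz (by omega))
          simp [this]
      · exact hsing σ hσ hx
    intro σ hσ
    by_cases ha : σ a = 1
    · exact hone σ hσ ha
    · have := hA _ (Finset.mem_image_of_mem _ hσ)
      rwa [Finset.sum_eq_single_of_mem σ (by simp [hσ])] at this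
      intro τ hτ hne
      obtain ⟨hτ, hz⟩ := Finset.mem_filter.1 hτ
      apply hone τ hτ
      by_contra h0
      exact hne (zres_ext (hS τ hτ) (hS σ hσ) hz (by omega))

theorem exists_inv_of_inj {m n : Type*} [Fintype m] [Fintype n] [DecidableEq m] [DecidableEq n]
    (A : Matrix m n ℚ) (hc : Fintype.card m = Fintype.card n)
    (h : ∀ v : n → ℚ, A.mulVec v = 0 → v = 0) :
    ∃ N : Matrix n m ℚ, A * N = 1 ∧ N * A = 1 := by
  obtain ⟨g, hg⟩ := LinearMap.exists_leftInverse_of_injective (Matrix.toLin' A)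
    (LinearMap.ker_eq_bot'.2 (fun v hv => h v (by simpa using hv)))
  have h1 : LinearMap.toMatrix' g * A = 1 := by
    have := congrArg LinearMap.toMatrix' hg
    rwa [LinearMap.toMatrix'_comp, LinearMap.toMatrix'_toLin', LinearMap.toMatrix'_id] at this
  exact ⟨_, (Matrix.mul_eq_one_comm_of_card_eq _ _ _ hc).2 h1, h1⟩

open Classical in
/-- Let `I ⊆ {1,…,s}` and `Σ` a finite set of zero-nonzero conditions
on `I`. The square matrix `Mat(Ada(Σ), Σ)`, with rows indexed by `Ada(Σ)`, columns
indexed by `Σ`, and `(J, σ)` entry `σ^J = ∏_{i ∈ J} σ(i)`, is invertible over `ℚ`: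
it has a two-sided inverse. -/
theorem mat_Ada_invertible (s : ℕ) (I : Finset ℕ) (hI : I ⊆ Finset.Icc 1 s)
    (S : Finset (ℕ → Fin 2)) (hsupp : ∀ σ ∈ S, ∀ j ∉ I, σ j = 0) :
    ∃ N : Matrix { σ // σ ∈ S } { J // J ∈ Ada I S } ℚ,
      (Matrix.of fun (J : { J // J ∈ Ada I S }) (σ : { σ // σ ∈ S }) =>
          ∏ i ∈ J.1, ((σ.1 i : ℕ) : ℚ)) * N = 1 ∧
      N * (Matrix.of fun (J : { J // J ∈ Ada I S }) (σ : { σ // σ ∈ S }) =>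
          ∏ i ∈ J.1, ((σ.1 i : ℕ) : ℚ)) = 1 := by
  apply exists_inv_of_inj
  · simpa using ada_card I S hsupp
  · intro v hv
    have key := ada_inj I S hsupp (fun σ => if h : σ ∈ S then v ⟨σ, h⟩ else 0) (by
      intro J hJ
      have := congrFun hv ⟨J, hJ⟩
      simp only [Matrix.mulVec, dotProduct, Matrix.of_apply, Pi.zero_apply] at this
      rw [← Finset.sum_coe_sort, ← this]
      apply Finset.sum_congr rfl
      intro σ _
      simp)
    funext σ
    have := key σ.1 σ.2
    simpa using this
end

section
/- Let I ⊆ {1,…,s} and Σ a nonempty finite set of zero-nonzero conditions on I. Then Ada(Σ) = Ada(Comp(Σ)), where Comp(Σ) is the set of restrictions of elements of Σ to the compressed set of indices comp(Σ). -/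
open Classical in
/-- The compressed set of indices `comp(Σ)` of a finite set `Σ` of zero-nonzero
conditions on `I`, defined by recursion on `card I`: `comp(Σ) = ∅` if `I = ∅`;
otherwise, with `i = max I`, `I' = I \ {i}` and `Ξ` the set of restrictions of the
elements of `Σ` to `I'`, `comp(Σ) = comp(Ξ)` if `card Σ = card Ξ`, and
`comp(Σ) = comp(Ξ) ∪ {i}` if `card Σ > card Ξ`. -/
noncomputable def zcomp (I : Finset ℕ) (S : Finset (ℕ → Fin 2)) : Finset ℕ :=
  if hI : I.Nonempty then
    let i := I.max' hI
    let I' := I.erase i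
    let Xi : Finset (ℕ → Fin 2) := S.image (zres I')
    if S.card = Xi.card then zcomp I' Xi else insert i (zcomp I' Xi)
  else ∅
termination_by I.card
decreasing_by
  all_goals exact Finset.card_erase_lt_of_mem (I.max'_mem hI)

theorem zres_zres {C I : Finset ℕ} (h : C ⊆ I) (σ : ℕ → Fin 2) :
    zres C (zres I σ) = zres C σ := by
  funext j
  by_cases hj : j ∈ C
  · simp [zres, hj, h hj]
  · simp [zres, hj]

theorem zres_eq_iff {C : Finset ℕ} {σ τ : ℕ → Fin 2} :
    zres C σ = zres C τ ↔ ∀ j ∈ C, σ j = τ j := by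
  constructor
  · intro h j hj
    have := congrFun h j
    simpa [zres, hj] using this
  · intro h
    funext j
    by_cases hj : j ∈ C
    · simp [zres, hj, h j hj]
    · simp [zres, hj]

open Classical in
/-- The set of elements with two different extensions. -/
noncomputable def zdbl (I' : Finset ℕ) (S : Finset (ℕ → Fin 2)) : Finset (ℕ → Fin 2) :=
  (S.image (zres I')).filter (fun ξ => 1 < (S.filter (fun σ => zres I' σ = ξ)).card)

theorem mem_zdbl {I' : Finset ℕ} {S : Finset (ℕ → Fin 2)} {ξ : ℕ → Fin 2} :
    ξ ∈ zdbl I' S ↔ ∃ σ ∈ S, ∃ τ ∈ S, zres I' σ = ξ ∧ zres I' τ = ξ ∧ σ ≠ τ := by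
  classical
  simp only [zdbl, Finset.mem_filter, Finset.mem_image, Finset.one_lt_card]
  constructor
  · rintro ⟨-, σ, ⟨hσ, h1⟩, τ, ⟨hτ, h2⟩, hne⟩
    exact ⟨σ, hσ, τ, hτ, h1, h2, hne⟩
  · rintro ⟨σ, hσ, τ, hτ, h1, h2, hne⟩
    exact ⟨⟨σ, hσ, h1⟩, σ, ⟨hσ, h1⟩, τ, ⟨hτ, h2⟩, hne⟩

open Classical in
theorem Ada_step {I : Finset ℕ} (S : Finset (ℕ → Fin 2)) (hI : I.Nonempty) {i : ℕ}
    (hi : I.max' hI = i) :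
    Ada I S = Ada (I.erase i) (S.image (zres (I.erase i))) ∪
      (Ada (I.erase i) (zdbl (I.erase i) S)).image (insert i) := by
  subst hi
  rw [Ada, dif_pos hI]
  rfl

theorem Ada_empty_index (S : Finset (ℕ → Fin 2)) [Decidable (S = ∅)] :
    Ada ∅ S = if S = ∅ then ∅ else {∅} := by
  rw [Ada, dif_neg (by simp)]
  congr

theorem Ada_empty (n : ℕ) : ∀ I : Finset ℕ, I.card = n → Ada I ∅ = ∅ := by
  classical
  induction n with
  | zero =>
    intro I h
    rw [Finset.card_eq_zero] at h
    subst h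
    simp [Ada_empty_index]
  | succ n ih =>
    intro I h
    have hI : I.Nonempty := by
      rw [← Finset.card_pos]; omega
    have hc : (I.erase (I.max' hI)).card = n := by
      rw [Finset.card_erase_of_mem (I.max'_mem hI)]; omega
    rw [Ada_step _ hI rfl]
    have : zdbl (I.erase (I.max' hI)) ∅ = ∅ := by simp [zdbl]
    simp [this, ih _ hc]

/-- Every coordinate of `I` outside `C` is determined on `S` by the smaller ones. -/
def zdet (I C : Finset ℕ) (S : Finset (ℕ → Fin 2)) : Prop :=
  ∀ σ ∈ S, ∀ τ ∈ S, ∀ j ∈ I, j ∉ C → (∀ k ∈ I, k < j → σ k = τ k) → σ j = τ j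

theorem zdet_agree {I C : Finset ℕ} {S : Finset (ℕ → Fin 2)} (h : zdet I C S)
    {σ τ : ℕ → Fin 2} (hσ : σ ∈ S) (hτ : τ ∈ S) (m : ℕ)
    (hC : ∀ j ∈ C, j < m → σ j = τ j) : ∀ j ∈ I, j < m → σ j = τ j := by
  intro j
  induction j using Nat.strong_induction_on with
  | _ j ih =>
    intro hj hm
    by_cases hjC : j ∈ C
    · exact hC j hjC hm
    · exact h σ hσ τ hτ j hj hjC (fun k hk hkj => ih k hkj hk (hkj.trans hm))

open Classical in
theorem Ada_eq_of_zdet (n : ℕ) : ∀ (I C : Finset ℕ) (S : Finset (ℕ → Fin 2)), I.card = n →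
    (∀ σ ∈ S, ∀ j ∉ I, σ j = 0) → C ⊆ I → zdet I C S →
    Ada I S = Ada C (S.image (zres C)) := by
  induction n with
  | zero =>
    intro I C S h _ hC _
    rw [Finset.card_eq_zero] at h
    subst h
    rw [Finset.subset_empty] at hC
    subst hC
    simp [Ada_empty_index]
  | succ n ih =>
    intro I C S h hsupp hC hdet
    have hI : I.Nonempty := by
      rw [← Finset.card_pos]; omega
    obtain ⟨i, hi⟩ : ∃ i, I.max' hI = i := ⟨_, rfl⟩
    have hiI : i ∈ I := hi ▸ I.max'_mem hI
    have hle : ∀ j ∈ I, j ≤ i := fun j hj => hi ▸ I.le_max' j hj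
    have hlt : ∀ j ∈ I.erase i, j < i := fun j hj =>
      lt_of_le_of_ne (hle j (Finset.mem_of_mem_erase hj)) (Finset.ne_of_mem_erase hj)
    have hc : (I.erase i).card = n := by
      rw [Finset.card_erase_of_mem hiI]; omega
    have hsub : zdbl (I.erase i) S ⊆ S.image (zres (I.erase i)) := Finset.filter_subset _ _
    have hsX : ∀ σ ∈ S.image (zres (I.erase i)), ∀ j ∉ I.erase i, σ j = 0 := by
      intro σ hσ j hj
      obtain ⟨τ, -, rfl⟩ := Finset.mem_image.1 hσ
      rw [zres, if_neg hj]
    have hdX : zdet (I.erase i) (C.erase i) (S.image (zres (I.erase i))) := by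
      intro σ hσ τ hτ j hj hjC hk
      obtain ⟨σ, hσ0, rfl⟩ := Finset.mem_image.1 hσ; replace hσ := hσ0
      obtain ⟨τ, hτ0, rfl⟩ := Finset.mem_image.1 hτ; replace hτ := hτ0
      have hji := hlt j hj
      have hres : ∀ (ρ : ℕ → Fin 2), ∀ k ∈ I.erase i, zres (I.erase i) ρ k = ρ k := by
        intro ρ k hk
        rw [zres, if_pos hk]
      rw [hres _ _ hj, hres _ _ hj]
      refine hdet σ hσ τ hτ j (Finset.mem_of_mem_erase hj)
        (fun hh => hjC (Finset.mem_erase.2 ⟨hji.ne, hh⟩)) ?_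
      intro k hkI hkj
      have hk' : k ∈ I.erase i := Finset.mem_erase.2 ⟨(hkj.trans hji).ne, hkI⟩
      have := hk k hk' hkj
      rwa [hres _ _ hk', hres _ _ hk'] at this
    have hCe : C.erase i ⊆ I.erase i := Finset.erase_subset_erase _ hC
    have himg : ∀ D ⊆ I.erase i, (S.image (zres (I.erase i))).image (zres D)
        = S.image (zres D) := by
      intro D hD
      rw [Finset.image_image]
      exact Finset.image_congr (fun σ _ => zres_zres hD σ)
    have h1 := ih _ _ _ hc hsX hCe hdX
    have h2 := ih _ _ (zdbl (I.erase i) S) hc (fun σ hσ => hsX σ (hsub hσ)) hCe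
      (fun σ hσ τ hτ => hdX σ (hsub hσ) τ (hsub hτ))
    rw [himg _ hCe] at h1
    rw [Ada_step S hI hi]
    by_cases hiC : i ∈ C
    · have hCne : C.Nonempty := ⟨i, hiC⟩
      have hmax : C.max' hCne = i :=
        le_antisymm (hle _ (hC (C.max'_mem hCne))) (C.le_max' i hiC)
      rw [Ada_step _ hCne hmax, h1, h2]
      have e1 : (S.image (zres C)).image (zres (C.erase i)) = S.image (zres (C.erase i)) := by
        rw [Finset.image_image]
        exact Finset.image_congr (fun σ _ => zres_zres (Finset.erase_subset _ _) σ)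
      have e2 : zdbl (C.erase i) (S.image (zres C))
          = (zdbl (I.erase i) S).image (zres (C.erase i)) := by
        ext η
        rw [mem_zdbl, Finset.mem_image]
        constructor
        · rintro ⟨σ, hσ, τ, hτ, a, b, hne⟩
          obtain ⟨σ, hσ0, rfl⟩ := Finset.mem_image.1 hσ; replace hσ := hσ0
          obtain ⟨τ, hτ0, rfl⟩ := Finset.mem_image.1 hτ; replace hτ := hτ0
          rw [zres_zres (Finset.erase_subset _ _)] at a b
          have hag := zres_eq_iff.1 (a.trans b.symm)
          have hI' : zres (I.erase i) σ = zres (I.erase i) τ := by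
            rw [zres_eq_iff]
            intro j hj
            refine zdet_agree hdet hσ hτ i ?_ j (Finset.mem_of_mem_erase hj) (hlt j hj)
            intro k hk hki
            exact hag k (Finset.mem_erase.2 ⟨hki.ne, hk⟩)
          refine ⟨zres (I.erase i) σ, mem_zdbl.2 ⟨σ, hσ, τ, hτ, rfl, hI'.symm, ?_⟩, ?_⟩
          · rintro rfl
            exact hne rfl
          · rw [zres_zres hCe, a]
        · rintro ⟨ξ, hξ, rfl⟩
          obtain ⟨σ, hσ, τ, hτ, a, b, hne⟩ := mem_zdbl.1 hξ
          refine ⟨_, Finset.mem_image_of_mem _ hσ, _, Finset.mem_image_of_mem _ hτ, ?_, ?_, ?_⟩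
          · rw [zres_zres (Finset.erase_subset _ _), ← a, zres_zres hCe]
          · rw [zres_zres (Finset.erase_subset _ _), ← b, zres_zres hCe]
          · intro he
            apply hne
            have hag := zres_eq_iff.1 (a.trans b.symm)
            funext j
            by_cases hj : j ∈ I
            · by_cases hji : j = i
              · subst hji
                exact zres_eq_iff.1 he j hiC
              · exact hag j (Finset.mem_erase.2 ⟨hji, hj⟩)
            · rw [hsupp σ hσ j hj, hsupp τ hτ j hj]
      rw [e1, e2]
    · have e : zdbl (I.erase i) S = ∅ := by
        rw [Finset.eq_empty_iff_forall_notMem]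
        intro ξ hξ
        obtain ⟨σ, hσ, τ, hτ, a, b, hne⟩ := mem_zdbl.1 hξ
        apply hne
        have hag := zres_eq_iff.1 (a.trans b.symm)
        funext j
        by_cases hj : j ∈ I
        · by_cases hji : j = i
          · subst hji
            exact hdet σ hσ τ hτ j hj hiC
              (fun k hk hkj => hag k (Finset.mem_erase.2 ⟨hkj.ne, hk⟩))
          · exact hag j (Finset.mem_erase.2 ⟨hji, hj⟩)
        · rw [hsupp σ hσ j hj, hsupp τ hτ j hj]
      rw [e, Ada_empty _ _ rfl, Finset.image_empty, Finset.union_empty, h1,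
        Finset.erase_eq_of_notMem hiC]

open Classical in
theorem zcomp_spec (n : ℕ) : ∀ (I : Finset ℕ) (S : Finset (ℕ → Fin 2)), I.card = n →
    zcomp I S ⊆ I ∧ zdet I (zcomp I S) S := by
  induction n with
  | zero =>
    intro I S h
    rw [Finset.card_eq_zero] at h
    subst h
    rw [zcomp, dif_neg (by simp)]
    exact ⟨subset_rfl, fun σ _ τ _ j hj => by simp at hj⟩
  | succ n ih =>
    intro I S h
    have hI : I.Nonempty := by
      rw [← Finset.card_pos]; omega
    have hz : zcomp I S = if S.card = (S.image (zres (I.erase (I.max' hI)))).card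
        then zcomp (I.erase (I.max' hI)) (S.image (zres (I.erase (I.max' hI))))
        else insert (I.max' hI)
          (zcomp (I.erase (I.max' hI)) (S.image (zres (I.erase (I.max' hI))))) := by
      rw [zcomp, dif_pos hI]
    obtain ⟨i, hi⟩ : ∃ i, I.max' hI = i := ⟨_, rfl⟩
    have hiI : i ∈ I := hi ▸ I.max'_mem hI
    have hle : ∀ j ∈ I, j ≤ i := fun j hj => hi ▸ I.le_max' j hj
    rw [hi] at hz
    have hc : (I.erase i).card = n := by
      rw [Finset.card_erase_of_mem hiI]; omega
    obtain ⟨hs, hd⟩ := ih (I.erase i) (S.image (zres (I.erase i))) hc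
    have hD : zcomp (I.erase i) (S.image (zres (I.erase i))) ⊆ zcomp I S := by
      rw [hz]
      split_ifs
      · exact subset_rfl
      · exact Finset.subset_insert _ _
    refine ⟨?_, ?_⟩
    · rw [hz]
      split_ifs
      · exact hs.trans (Finset.erase_subset _ _)
      · exact Finset.insert_subset hiI (hs.trans (Finset.erase_subset _ _))
    · intro σ hσ τ hτ j hj hjC hk
      by_cases hji : j = i
      · subst hji
        by_cases hcard : S.card = (S.image (zres (I.erase j))).card
        · have hinj := Finset.card_image_iff.1 hcard.symm
          have : σ = τ := by
            apply hinj hσ hτ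
            rw [zres_eq_iff]
            intro k hk'
            exact hk k (Finset.mem_of_mem_erase hk') (lt_of_le_of_ne
              (hle k (Finset.mem_of_mem_erase hk')) (Finset.ne_of_mem_erase hk'))
          rw [this]
        · rw [if_neg hcard] at hz
          exact absurd (hz ▸ Finset.mem_insert_self _ _) hjC
      · have hj' : j ∈ I.erase i := Finset.mem_erase.2 ⟨hji, hj⟩
        have := hd _ (Finset.mem_image_of_mem _ hσ) _ (Finset.mem_image_of_mem _ hτ) j hj'
          (fun hh => hjC (hD hh)) (by
            intro k hk' hkj
            rw [zres, zres, if_pos hk', if_pos hk']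
            exact hk k (Finset.mem_of_mem_erase hk') hkj)
        rwa [zres, zres, if_pos hj', if_pos hj'] at this

open Classical in
/-- Let `I ⊆ {1,…,s}` and `Σ` a nonempty finite set of zero-nonzero
conditions on `I`. Then `Ada(Σ) = Ada(Comp(Σ))`, where `Comp(Σ)` is the set of
restrictions of the elements of `Σ` to the compressed set of indices `comp(Σ)`. -/
theorem Ada_eq_Ada_comp (s : ℕ) (I : Finset ℕ) (hI : I ⊆ Finset.Icc 1 s)
    (S : Finset (ℕ → Fin 2)) (hsupp : ∀ σ ∈ S, ∀ j ∉ I, σ j = 0)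
    (hS : S.Nonempty) :
    Ada I S = Ada (zcomp I S) (S.image (zres (zcomp I S))) := by
  obtain ⟨h1, h2⟩ := zcomp_spec _ I S rfl
  exact Ada_eq_of_zdet _ I _ S rfl hsupp h1 h2
end

section
/- Let L be a field of characteristic zero and C an algebraically closed extension of L. Let P ∈ L[X] be a monic nonconstant polynomial with zero set Z = {x ∈ C : P(x) = 0}, and let Q ∈ L[X]. Then the invertibility-query of Q for Z satisfies Qu(Q,Z) = card{x ∈ C : P(x) = 0 and Q(x) ≠ 0} = deg(P) − deg(gcd(P, P'·Q)), where P' is the derivative of P. -/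
open Polynomial

theorem aux_mult {C : Type*} [Field C] [CharZero C] (d : DecidableEq C) (p q : Polynomial C) (hp : p ≠ 0)
    (x : C) (hx : p.IsRoot x) :
    p.rootMultiplicity x = (EuclideanDomain.gcd p (derivative p * q)).rootMultiplicity x
      + if q.eval x ≠ 0 then 1 else 0 := by
  have hg : EuclideanDomain.gcd p (derivative p * q) ≠ 0 := by
    intro h
    exact hp (EuclideanDomain.gcd_eq_zero_iff.1 h).1
  have hder := derivative_rootMultiplicity_of_root hx
  have hpos : 0 < p.rootMultiplicity x := (rootMultiplicity_pos hp).2 hx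
  have hd' : (X - Polynomial.C x) ^ (p.rootMultiplicity x - 1) ∣ derivative p := by
    rw [← hder]; exact pow_rootMultiplicity_dvd _ _
  have hdp : (X - Polynomial.C x) ^ (p.rootMultiplicity x) ∣ p := pow_rootMultiplicity_dvd _ _
  have hsucc : p.rootMultiplicity x = (p.rootMultiplicity x - 1) + 1 := by omega
  split_ifs with hq
  · have hd0 : derivative p ≠ 0 := by
      intro h
      have h1 := natDegree_eq_zero_of_derivative_eq_zero h
      rw [eq_C_of_natDegree_eq_zero h1] at hx
      apply hp
      rw [eq_C_of_natDegree_eq_zero h1]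
      simpa using hx
    have hq0 : q ≠ 0 := by rintro rfl; simp at hq
    have hm : (derivative p * q).rootMultiplicity x = p.rootMultiplicity x - 1 := by
      rw [rootMultiplicity_mul (mul_ne_zero hd0 hq0), hder, rootMultiplicity_eq_zero (p := q) hq]
      rfl
    have h1 := rootMultiplicity_le_rootMultiplicity_of_dvd (mul_ne_zero hd0 hq0)
      (EuclideanDomain.gcd_dvd_right p (derivative p * q)) x
    have h2 : p.rootMultiplicity x - 1 ≤ 
        (EuclideanDomain.gcd p (derivative p * q)).rootMultiplicity x := by
      rw [le_rootMultiplicity_iff hg]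
      exact EuclideanDomain.dvd_gcd ((pow_dvd_pow _ (Nat.sub_le _ _)).trans hdp)
        (hd'.mul_right _)
    omega
  · push Not at hq
    have h1 := rootMultiplicity_le_rootMultiplicity_of_dvd hp
      (EuclideanDomain.gcd_dvd_left p (derivative p * q)) x
    have h2 : p.rootMultiplicity x ≤ 
        (EuclideanDomain.gcd p (derivative p * q)).rootMultiplicity x := by
      rw [le_rootMultiplicity_iff hg]
      refine EuclideanDomain.dvd_gcd hdp ?_
      rw [hsucc, pow_succ]
      exact mul_dvd_mul hd' (dvd_iff_isRoot.2 hq)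
    omega

open Classical in
/-- Let `L` be a field of characteristic zero and `C` an algebraically
closed extension of `L`. Let `P ∈ L[X]` be monic nonconstant with zero set
`Z = {x ∈ C : P(x) = 0}`, and `Q ∈ L[X]`. Then the invertibility-query of `Q` for `Z`
satisfies `Qu(Q, Z) = card {x ∈ C : P(x) = 0 ∧ Q(x) ≠ 0} = deg P − deg gcd(P, P'·Q)`. -/
theorem invertibility_query_eq_deg_sub_deg_gcd
    {L C : Type*} [Field L] [CharZero L] [Field C] [IsAlgClosed C] [Algebra L C]
    (P Q : Polynomial L) (hP : P.Monic) (hdeg : 0 < P.natDegree) :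
    (((P.map (algebraMap L C)).roots.toFinset.filter
        (fun x => Polynomial.aeval x Q ≠ 0)).card
      = {x : C | Polynomial.aeval x P = 0 ∧ Polynomial.aeval x Q ≠ 0}.ncard)
    ∧ (((P.map (algebraMap L C)).roots.toFinset.filter
        (fun x => Polynomial.aeval x Q ≠ 0)).card
      = P.natDegree - (EuclideanDomain.gcd P (Polynomial.derivative P * Q)).natDegree) := by
  have hp0 : P.map (algebraMap L C) ≠ 0 := (hP.map _).ne_zero
  constructor
  · rw [← Set.ncard_coe_finset]
    congr 1
    ext x
    rw [Finset.mem_coe, Finset.mem_filter, Multiset.mem_toFinset, mem_roots hp0, IsRoot.def,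
      eval_map, Set.mem_setOf_eq, aeval_def, aeval_def]
  · haveI : CharZero C := charZero_of_injective_algebraMap (algebraMap L C).injective
    set p := P.map (algebraMap L C) with hp
    set q := Q.map (algebraMap L C) with hq
    have hgm : (EuclideanDomain.gcd P (derivative P * Q)).map (algebraMap L C)
        = EuclideanDomain.gcd p (derivative p * q) := by
      rw [← gcd_map, Polynomial.map_mul, derivative_map]
    rw [← natDegree_map (p := P) (algebraMap L C),
      ← natDegree_map (p := EuclideanDomain.gcd P (derivative P * Q)) (algebraMap L C), hgm, ← hp]
    set g := EuclideanDomain.gcd p (derivative p * q) with hg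
    rw [← splits_iff_card_roots.1 (IsAlgClosed.splits p),
      ← splits_iff_card_roots.1 (IsAlgClosed.splits g)]
    have hsub : g.roots.toFinset ⊆ p.roots.toFinset :=
      Multiset.toFinset_subset.2 (Multiset.subset_of_le
        (roots.le_of_dvd hp0 (EuclideanDomain.gcd_dvd_left _ _)))
    rw [← Multiset.toFinset_sum_count_eq p.roots,
      ← Multiset.sum_count_eq_card (s := p.roots.toFinset) (m := g.roots)
        (fun a ha => hsub (Multiset.mem_toFinset.2 ha)), Finset.card_filter]
    have key : ∑ x ∈ p.roots.toFinset, p.roots.count x = ∑ x ∈ p.roots.toFinset, g.roots.count x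
        + ∑ x ∈ p.roots.toFinset, (if aeval x Q ≠ 0 then 1 else 0) := by
      rw [← Finset.sum_add_distrib]
      refine Finset.sum_congr rfl fun x hx => ?_
      have h := aux_mult (Classical.decEq C) p q hp0 x (isRoot_of_mem_roots (Multiset.mem_toFinset.1 hx))
      have hev : aeval x Q = q.eval x := by rw [hq, eval_map, aeval_def]
      rw [count_roots, count_roots, hev, h]
    omega
end
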